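/- Let τ be a first-order language and let S and T be τ-theories. Say that a τ-sentence ψ separates T from S if every model of T satisfies ψ and every model of S satisfies ¬ψ. Then the following are equivalent: (1) no universal (Π₁) τ-sentence separates T from S; (2) there exist a model M of S, a model N of T, and a τ-embedding of M into N. -/

import Mathlib

open FirstOrder FirstOrder.Language

universe u v

namespace ModelCompanionship

variable {L : FirstOrder.Language.{u, v}}

/-- Iterated existential quantification over the last `k` bound variables. -/
def exsN {α : Type*} : ∀ {n k : ℕ}, L.BoundedFormula α (n + k) → L.BoundedFormula α n
  | _, 0, φ => φ
  | _, _ + 1, φ => exsN φ.ex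

/-- A sentence is universal (Π₁) if it is the universal closure of a
quantifier-free formula. -/
def IsUniversalSentence (φ : L.Sentence) : Prop :=
  ∃ (n : ℕ) (ψ : L.BoundedFormula Empty n), ψ.IsQF ∧ φ = ψ.alls

/-- A sentence is Π₂ if it is of the form `∀ x⃗ ∃ y⃗ φ` with `φ` quantifier-free. -/
def IsPi2Sentence (φ : L.Sentence) : Prop :=
  ∃ (m k : ℕ) (ψ : L.BoundedFormula Empty (m + k)), ψ.IsQF ∧ φ = (exsN ψ).alls

/-- A formula is existential if it is the existential closure of a
quantifier-free formula. -/
def IsExistentialFormula {α : Type*} (φ : L.Formula α) : Prop :=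
  ∃ (n : ℕ) (ψ : L.BoundedFormula α n), ψ.IsQF ∧ φ = ψ.exs

/-- A formula is universal if it is the universal closure of a
quantifier-free formula. -/
def IsUniversalFormula {α : Type*} (φ : L.Formula α) : Prop :=
  ∃ (n : ℕ) (ψ : L.BoundedFormula α n), ψ.IsQF ∧ φ = ψ.alls

/-- A bundled nonempty `L`-structure (with domain in universe `max u v`). -/
structure BStruc (L : FirstOrder.Language.{u, v}) where
  carrier : Type (max u v)
  [str : L.Structure carrier]
  [nonempty' : Nonempty carrier]

instance (N : BStruc L) : L.Structure N.carrier := N.str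

instance (N : BStruc L) : Nonempty N.carrier := N.nonempty'

/-- `φ` is a semantic consequence of `T`: it holds in every (nonempty) model of `T`. -/
def Consequence (T : L.Theory) (φ : L.Sentence) : Prop :=
  ∀ M : BStruc L, M.carrier ⊨ T → M.carrier ⊨ φ

/-- A formula with free variables is a semantic consequence of `T` if its universal
closure holds in every (nonempty) model of `T`. -/
def FormulaConsequence {α : Type*} (T : L.Theory) (φ : L.Formula α) : Prop :=
  ∀ M : BStruc L, M.carrier ⊨ T → ∀ v : α → M.carrier, φ.Realize v

/-- `T_∀`: the set of universal sentences which are consequences of `T`. -/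
def univConsequences (T : L.Theory) : L.Theory :=
  {φ | IsUniversalSentence φ ∧ Consequence T φ}

/-- A theory is complete if it is satisfiable and decides every sentence. -/
def IsCompleteTheory (T : L.Theory) : Prop :=
  T.IsSatisfiable ∧ ∀ φ : L.Sentence, Consequence T φ ∨ Consequence T φ.not

/-- A theory is Π₁-complete if it is satisfiable and decides every universal sentence. -/
def Pi1Complete (T : L.Theory) : Prop :=
  T.IsSatisfiable ∧ ∀ φ : L.Sentence, IsUniversalSentence φ →
    (Consequence T φ ∨ Consequence T φ.not)

/-- An embedding is Σ₁-elementary (`M ≺₁ N`) if it reflects existential formulas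
with parameters in the domain. -/
def Sigma1Elementary {M : Type*} {N : Type*} [L.Structure M] [L.Structure N]
    (j : M ↪[L] N) : Prop :=
  ∀ (n : ℕ) (φ : L.Formula (Fin n)), IsExistentialFormula φ →
    ∀ a : Fin n → M, φ.Realize (fun i => j (a i)) → φ.Realize a

/-- An embedding is elementary if it preserves and reflects all first-order formulas. -/
def ElementaryEmb {M : Type*} {N : Type*} [L.Structure M] [L.Structure N]
    (j : M ↪[L] N) : Prop :=
  ∀ (n : ℕ) (φ : L.Formula (Fin n)) (a : Fin n → M),
    φ.Realize (fun i => j (a i)) ↔ φ.Realize a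

/-- `M` is `T`-existentially closed: it embeds into a model of `T` and every
embedding of `M` into a model of `T` is Σ₁-elementary. -/
def IsEC (T : L.Theory) (M : Type*) [L.Structure M] : Prop :=
  (∃ N : BStruc L, N.carrier ⊨ T ∧ Nonempty (M ↪[L] N.carrier)) ∧
  ∀ N : BStruc L, N.carrier ⊨ T → ∀ j : M ↪[L] N.carrier, Sigma1Elementary j

/-- A theory is model complete if every embedding between its models is elementary. -/
def ModelComplete (T : L.Theory) : Prop :=
  ∀ M N : BStruc L, M.carrier ⊨ T → N.carrier ⊨ T →
    ∀ j : M.carrier ↪[L] N.carrier, ElementaryEmb j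

/-- `Tstar` is the model companion of `T`. -/
def IsModelCompanion (T Tstar : L.Theory) : Prop :=
  (∀ M : BStruc L, M.carrier ⊨ T →
    ∃ N : BStruc L, N.carrier ⊨ Tstar ∧ Nonempty (M.carrier ↪[L] N.carrier)) ∧
  (∀ M : BStruc L, M.carrier ⊨ Tstar →
    ∃ N : BStruc L, N.carrier ⊨ T ∧ Nonempty (M.carrier ↪[L] N.carrier)) ∧
  ModelComplete Tstar

/-!
Embeddings reflect universal sentences, so an embedding of a model of `S` into a model of `T` rules
out a separating sentence. Conversely, suppose that there is none. The universal consequences `T_∀`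
of `T` are closed under finite conjunction up to equivalence, so by compactness `S ∪ T_∀` has a
model `M`. A finite part of the quantifier-free diagram of `M` is a quantifier-free formula realized
in `M`; it is realized in some model of `T`, since otherwise the universal closure of its negation
would lie in `T_∀` and hold in `M`. By compactness again `T` has a model realizing the whole
diagram, and `M` embeds into it.
-/

universe w

section QuantifierFree

variable {α β ι : Type*} {n : ℕ}

theorem isQF_restrictFreeVar [DecidableEq α] {φ : L.BoundedFormula α n} (hφ : φ.IsQF)
    (f : φ.freeVarFinset → β) : (φ.restrictFreeVar f).IsQF := by
  induction hφ with
  | falsum => exact .falsum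
  | of_isAtomic hatomic =>
    cases hatomic with
    | equal => exact (BoundedFormula.IsAtomic.equal _ _).isQF
    | rel => exact (BoundedFormula.IsAtomic.rel _ _).isQF
  | imp _ _ ih₁ ih₂ => exact (ih₁ _).imp (ih₂ _)

theorem isQF_toFormula {φ : L.BoundedFormula α n} (hφ : φ.IsQF) : φ.toFormula.IsQF := by
  induction hφ with
  | falsum => exact .falsum
  | of_isAtomic hatomic =>
    cases hatomic with
    | equal => exact (BoundedFormula.IsAtomic.equal _ _).isQF
    | rel => exact (BoundedFormula.IsAtomic.rel _ _).isQF
  | imp _ _ ih₁ ih₂ => exact ih₁.imp ih₂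

theorem isQF_iInf [Finite ι] {φ : ι → L.BoundedFormula α n} (hφ : ∀ i, (φ i).IsQF) :
    (BoundedFormula.iInf φ).IsQF :=
  List.foldrRecOn _ _ .top fun _ hacc ψ hψ => by
    obtain ⟨i, -, rfl⟩ := List.mem_map.1 hψ
    exact (hφ i).inf hacc

end QuantifierFree

section UniversalSentence

variable {α ι : Type*}

/-- The universal closure of a formula over the finitely many variables occurring freely in it,
in analogy with Mathlib's `FirstOrder.Language.Formula.exClosure`. -/
noncomputable def allClosure [DecidableEq α] (φ : L.Formula α) : L.Sentence :=
  Formula.iAlls φ.freeVarFinset (Formula.relabel Sum.inr (φ.restrictFreeVar id))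

theorem isUniversalSentence_allClosure [DecidableEq α] {φ : L.Formula α} (hφ : φ.IsQF) :
    IsUniversalSentence (allClosure φ) :=
  ⟨_, _, ((isQF_restrictFreeVar hφ id).relabel _).relabel _, rfl⟩

theorem realize_allClosure [DecidableEq α] {M : Type*} [L.Structure M] [Nonempty M]
    {φ : L.Formula α} : M ⊨ allClosure φ ↔ ∀ v : α → M, φ.Realize v := by
  calc M ⊨ allClosure φ
      ↔ ∀ w : φ.freeVarFinset → M, Formula.Realize (φ.restrictFreeVar id) w := by
        simp [Sentence.Realize, allClosure, Formula.realize_iAlls, Function.comp_def]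
    _ ↔ ∀ v : α → M, Formula.Realize (φ.restrictFreeVar id) (v ∘ Subtype.val) :=
        Subtype.val_injective.surjective_comp_right.forall
    _ ↔ ∀ v : α → M, φ.Realize v :=
        forall_congr' fun v => BoundedFormula.realize_restrictFreeVar v fun _ => rfl

theorem realize_alls_iff_forall_realize_toFormula {M : Type*} [L.Structure M] {n : ℕ}
    {φ : L.BoundedFormula Empty n} :
    M ⊨ φ.alls ↔ ∀ v : Empty ⊕ Fin n → M, φ.toFormula.Realize v := by
  simp only [Sentence.Realize, BoundedFormula.realize_alls, BoundedFormula.realize_toFormula]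
  refine ⟨fun h v => ?_, fun h xs => by simpa using h (Sum.elim default xs)⟩
  rw [Subsingleton.elim (v ∘ Sum.inl) default]
  exact h (v ∘ Sum.inr)

theorem exists_isUniversalSentence_realize_iff_forall [Finite ι] {φ : ι → L.Sentence}
    (hφ : ∀ i, IsUniversalSentence (φ i)) :
    ∃ χ : L.Sentence, IsUniversalSentence χ ∧
      ∀ (M : Type w) [L.Structure M] [Nonempty M], M ⊨ χ ↔ ∀ i, M ⊨ φ i := by
  classical
  choose n ψ hψ hφψ using hφ
  -- With variables renamed apart, the universal quantifiers commute with the conjunction.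
  let Var : Type _ := Σ i, Empty ⊕ Fin (n i)
  let rename (i : ι) : Empty ⊕ Fin (n i) → Var := fun a => ⟨i, a⟩
  have rename_injective (i : ι) : Function.Injective (rename i) :=
    sigma_mk_injective (β := fun i => Empty ⊕ Fin (n i))
  let renamed (i : ι) : L.Formula Var := (ψ i).toFormula.relabel (rename i)
  have hrenamed (i : ι) : (renamed i).IsQF := (isQF_toFormula (hψ i)).relabel _
  refine ⟨allClosure (Formula.iInf renamed), isUniversalSentence_allClosure (isQF_iInf hrenamed),
    fun M _ _ => ?_⟩
  calc M ⊨ allClosure (Formula.iInf renamed)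
      ↔ ∀ v : Var → M, ∀ i, (ψ i).toFormula.Realize (v ∘ rename i) := by
        simp only [realize_allClosure, Formula.realize_iInf, renamed, Formula.realize_relabel]
    _ ↔ ∀ i, ∀ v : Var → M, (ψ i).toFormula.Realize (v ∘ rename i) := forall_comm
    _ ↔ ∀ i, ∀ v : Empty ⊕ Fin (n i) → M, (ψ i).toFormula.Realize v :=
        forall_congr' fun i => (rename_injective i).surjective_comp_right.forall.symm
    _ ↔ ∀ i, M ⊨ φ i := by
        simp only [hφψ, realize_alls_iff_forall_realize_toFormula]

theorem IsUniversalSentence.realize_of_embedding {φ : L.Sentence} (hφ : IsUniversalSentence φ)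
    {M N : Type*} [L.Structure M] [L.Structure N] (j : M ↪[L] N) (hN : N ⊨ φ) : M ⊨ φ := by
  obtain ⟨n, ψ, hψ, rfl⟩ := hφ
  rw [Sentence.Realize, BoundedFormula.realize_alls] at hN ⊢
  intro xs
  rw [← hψ.realize_embedding j, Subsingleton.elim (j ∘ default) default]
  exact hN (j ∘ xs)

end UniversalSentence

theorem isSatisfiable_union_of_forall_finset {T U : L.Theory}
    (h : ∀ F : Finset L.Sentence, (F : L.Theory) ⊆ U → (T ∪ F).IsSatisfiable) :
    (T ∪ U).IsSatisfiable := by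
  classical
  refine Theory.isSatisfiable_iff_isFinitelySatisfiable.2 fun F hF => ?_
  refine (h {φ ∈ F | φ ∈ U} fun φ hφ => (Finset.mem_filter.1 hφ).2).mono fun φ hφ => ?_
  exact (hF hφ).imp_right fun hφU => Finset.mem_filter.2 ⟨hφ, hφU⟩

theorem isSatisfiable_union_univConsequences {S T : L.Theory}
    (h : ∀ ψ ∈ univConsequences T, ¬ Consequence S ψ.not) :
    (S ∪ univConsequences T).IsSatisfiable := by
  refine isSatisfiable_union_of_forall_finset fun F hF => ?_
  obtain ⟨χ, hχ, hχF⟩ := exists_isUniversalSentence_realize_iff_forall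
    (φ := ((↑) : F → L.Sentence)) fun φ => (hF φ.2).1
  have hTχ : Consequence T χ := fun N hN => (hχF N.carrier).2 fun φ => (hF φ.2).2 N hN
  obtain ⟨M, hMS, hMχ⟩ : ∃ M : BStruc L, M.carrier ⊨ S ∧ M.carrier ⊨ χ := by
    simpa [Consequence] using h χ ⟨hχ, hTχ⟩
  have hMF : M.carrier ⊨ (F : L.Theory) := ⟨fun φ hφ => (hχF M.carrier).1 hMχ ⟨φ, hφ⟩⟩
  have := hMS.union hMF
  exact Theory.Model.isSatisfiable M.carrier

section Diagram

variable (L) (M : Type w) [L.Structure M]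

/-- The quantifier-free diagram of `M`: the sentences with parameters from `M` arising from
quantifier-free `L`-formulas that hold in `M` when each variable `a : M` is interpreted as
itself. -/
def qfDiagram : L[[M]].Theory :=
  Formula.equivSentence '' {φ : L.Formula M | φ.IsQF ∧ φ.Realize id}

variable {L M}

theorem nonempty_embedding_of_realize_isQF {N : Type*} [L.Structure N] (f : M → N)
    (hf : ∀ φ : L.Formula M, φ.IsQF → φ.Realize id → φ.Realize f) : Nonempty (M ↪[L] N) := by
  have realize_iff (φ : L.Formula M) (hφ : φ.IsQF) : φ.Realize f ↔ φ.Realize id :=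
    ⟨fun h => by_contra fun hid => hf φ.not hφ.not (Formula.realize_not.2 hid) h, hf φ hφ⟩
  refine ⟨{ toFun := f, inj' := fun a b hab => ?_, map_fun' := fun g x => ?_,
            map_rel' := fun R x => ?_ }⟩
  · simpa [hab] using realize_iff ((Term.var a).equal (Term.var b))
      (BoundedFormula.IsAtomic.equal _ _).isQF
  · simpa [Function.comp_def] using realize_iff
      ((Term.var (Structure.funMap g x)).equal (Term.func g fun i => Term.var (x i)))
      (BoundedFormula.IsAtomic.equal _ _).isQF
  · simpa [Formula.realize_rel, Function.comp_def] using realize_iff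
      (R.formula fun i => Term.var (x i)) (BoundedFormula.IsAtomic.rel _ _).isQF

theorem nonempty_embedding_of_models_qfDiagram (N : Type*) [L.Structure N] [L[[M]].Structure N]
    [(L.lhomWithConstants M).IsExpansionOn N] (hN : N ⊨ qfDiagram L M) : Nonempty (M ↪[L] N) :=
  nonempty_embedding_of_realize_isQF (fun a => (L.con a : N)) fun φ hφ hid =>
    (Formula.realize_equivSentence N φ).1 (hN.realize_of_mem _ ⟨φ, ⟨hφ, hid⟩, rfl⟩)

end Diagram

section ModelsUnivConsequences

variable {T : L.Theory} {M : Type w} [L.Structure M] [Nonempty M]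

theorem exists_realize_of_models_univConsequences (hM : M ⊨ univConsequences T) {α : Type*}
    {φ : L.Formula α} (hφ : φ.IsQF) {v : α → M} (hv : φ.Realize v) :
    ∃ N : BStruc L, N.carrier ⊨ T ∧ ∃ w : α → N.carrier, φ.Realize w := by
  classical
  by_contra! hcon
  have hmem : allClosure φ.not ∈ univConsequences T :=
    ⟨isUniversalSentence_allClosure hφ.not, fun N hN => realize_allClosure.2 (hcon N hN)⟩
  exact realize_allClosure.1 (hM.realize_of_mem _ hmem) v hv

theorem isSatisfiable_onTheory_union_qfDiagram (hM : M ⊨ univConsequences T) :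
    ((L.lhomWithConstants M).onTheory T ∪ qfDiagram L M).IsSatisfiable := by
  classical
  refine isSatisfiable_union_of_forall_finset fun F hF => ?_
  obtain ⟨D, hD, rfl⟩ := Finset.subset_set_image_iff.1 hF
  let conj : L.Formula M := Formula.iInf ((↑) : D → L.Formula M)
  obtain ⟨N, hNT, w, hw⟩ : ∃ N : BStruc L, N.carrier ⊨ T ∧ ∃ w : M → N.carrier, conj.Realize w :=
    exists_realize_of_models_univConsequences hM (isQF_iInf fun φ => (hD φ.2).1)
      (Formula.realize_iInf.2 fun φ => (hD φ.2).2)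
  let : (constantsOn M).Structure N.carrier := constantsOn.structure w
  have hND : N.carrier ⊨ (D.image Formula.equivSentence : L[[M]].Theory) := by
    refine ⟨fun ψ hψ => ?_⟩
    obtain ⟨φ, hφ, rfl⟩ := Finset.mem_image.1 hψ
    exact (Formula.realize_equivSentence _ φ).2 (Formula.realize_iInf.1 hw ⟨φ, hφ⟩)
  have := ((LHom.onTheory_model (L.lhomWithConstants M) T).2 hNT).union hND
  exact Theory.Model.isSatisfiable N.carrier

theorem exists_model_embedding_of_models_univConsequences (hM : M ⊨ univConsequences T) :
    ∃ N : Theory.ModelType.{u, v, max u v w} T, Nonempty (M ↪[L] N) := by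
  obtain ⟨N⟩ := isSatisfiable_onTheory_union_qfDiagram hM
  let := (L.lhomWithConstants M).reduct N
  have hNT : N ⊨ T := (LHom.onTheory_model (L.lhomWithConstants M) T).1
    (N.is_model.mono Set.subset_union_left)
  have hMN : Nonempty (M ↪[L] N) :=
    nonempty_embedding_of_models_qfDiagram N (N.is_model.mono Set.subset_union_right)
  exact ⟨.of T N, hMN⟩

end ModelsUnivConsequences

/-- A universal sentence separates `T` from `S` iff no model of `S` embeds into a
model of `T`. -/
theorem no_universal_separation_iff_embedding (T S : L.Theory) :
    (¬ ∃ ψ : L.Sentence, IsUniversalSentence ψ ∧ Consequence T ψ ∧ Consequence S ψ.not) ↔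
      ∃ (M N : BStruc L), M.carrier ⊨ S ∧ N.carrier ⊨ T ∧
        Nonempty (M.carrier ↪[L] N.carrier) := by
  constructor
  · intro hsep
    obtain ⟨M⟩ : (S ∪ univConsequences T).IsSatisfiable :=
      isSatisfiable_union_univConsequences fun ψ hψ hS => hsep ⟨ψ, hψ.1, hψ.2, hS⟩
    have hMS : M ⊨ S := M.is_model.mono Set.subset_union_left
    have hMT : M ⊨ univConsequences T := M.is_model.mono Set.subset_union_right
    obtain ⟨N, hMN⟩ := exists_model_embedding_of_models_univConsequences hMT
    exact ⟨⟨M⟩, ⟨N⟩, hMS, N.is_model, hMN⟩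
  · rintro ⟨M, N, hM, hN, ⟨j⟩⟩ ⟨ψ, hψ, hT, hS⟩
    exact (Sentence.realize_not _).1 (hS M hM) (hψ.realize_of_embedding j (hT N hN))

end ModelCompanionship
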